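/- arXiv:1410.8198 — 2 statements merged into one kernel-verified Lean document; each statement's English description precedes it below -/
import Mathlib

section
/- For every ε > 0 there exists K > 0 such that for all integers k ≥ m ≥ 2 with k/(m−1) ≥ K, one has δ(m,k) ≤ ((e^{−γ} + ε) / ((k/(m−1)) · log log(k/(m−1))))^{m−1}, where γ is the Euler–Mascheroni constant. -/
open Filter Real

/-- A `k`-tuple of integers is admissible if for every prime `p` its entries
do not cover all residue classes mod `p`. -/
def AdmissibleTuple {k : ℕ} (x : Fin k → ℤ) : Prop :=
  ∀ p : ℕ, p.Prime → ∃ r : ZMod p, ∀ i, (x i : ZMod p) ≠ r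

/-- An `(m,k)`-plausible set: translation invariant, permutation invariant, and
every admissible `k`-tuple of distinct integers contains an `m`-subtuple lying in `A`. -/
def Plausible (m k : ℕ) (A : Set (Fin m → ℤ)) : Prop :=
  (∀ h ∈ A, ∀ t : ℤ, (fun i => h i + t) ∈ A) ∧
  (∀ h ∈ A, ∀ σ : Equiv.Perm (Fin m), (h ∘ σ) ∈ A) ∧
  (∀ x : Fin k → ℤ, Function.Injective x → AdmissibleTuple x →
    ∃ f : Fin m → Fin k, Function.Injective f ∧ (x ∘ f) ∈ A)

/-- The number of points of `A` in the box `[-N, N]^m`. -/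
noncomputable def boxCount (m : ℕ) (A : Set (Fin m → ℤ)) (N : ℕ) : ℕ :=
  Nat.card {h : Fin m → ℤ // h ∈ A ∧ ∀ i, |h i| ≤ (N : ℤ)}

/-- The liminf density of `A ⊆ ℤ^m` in boxes `[-N, N]^m`. -/
noncomputable def lowerBoxDensity (m : ℕ) (A : Set (Fin m → ℤ)) : ℝ :=
  Filter.liminf (fun N : ℕ => (boxCount m A N : ℝ) / (2 * N) ^ m) Filter.atTop

/-- `δ(m,k)`: the infimum over `(m,k)`-plausible sets `A` of the liminf density of `A`. -/
noncomputable def delta (m k : ℕ) : ℝ :=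
  sInf { d : ℝ | ∃ A : Set (Fin m → ℤ), Plausible m k A ∧ d = lowerBoxDensity m A }


/-- Tuples all of whose entries lie in one residue class mod `n`. -/
def congruentTuples (m n : ℕ) : Set (Fin m → ℤ) :=
  {h | ∀ i j, (n : ℤ) ∣ h i - h j}

lemma exists_int_sub_isUnit {k n : ℕ} (hn : n ≠ 0) {x : Fin k → ℤ} (hx : AdmissibleTuple x) :
    ∃ c : ℤ, ∀ i, IsUnit ((x i - c : ℤ) : ZMod n) := by
  choose! r hr using hx
  obtain ⟨c, hc⟩ := Nat.chineseRemainderOfFinset (fun p => (r p).val) id n.primeFactors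
    (fun p hp => (Nat.prime_of_mem_primeFactors hp).ne_zero)
    (fun p hp q hq hpq => (Nat.coprime_primes (Nat.prime_of_mem_primeFactors hp)
      (Nat.prime_of_mem_primeFactors hq)).2 hpq)
  refine ⟨c, fun i => ?_⟩
  rw [ZMod.coe_int_isUnit_iff_isCoprime, Int.isCoprime_iff_nat_coprime]
  rw [Int.natAbs_natCast]
  refine Nat.coprime_of_dvd fun p hp hpn hpx => ?_
  have hmem : p ∈ n.primeFactors := Nat.mem_primeFactors.2 ⟨hp, hpn, hn⟩
  have : Fact p.Prime := ⟨hp⟩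
  have h1 := (ZMod.natCast_eq_natCast_iff _ _ _).2 (hc p hmem)
  simp only [ZMod.natCast_val, ZMod.cast_id', id_eq] at h1
  have h2 : ((x i - c : ℤ) : ZMod p) = 0 :=
    (ZMod.intCast_zmod_eq_zero_iff_dvd _ _).2 (Int.natCast_dvd.2 hpx)
  push_cast at h2
  exact hr p hp i ((sub_eq_zero.1 h2).trans h1)

lemma plausible_congruentTuples {m k n : ℕ} (hn : n ≠ 0) (hk : n.totient * (m - 1) < k) :
    Plausible m k (congruentTuples m n) := by
  refine ⟨fun h hh t i j => by simpa using hh i j, fun h hh σ i j => hh _ _, fun x _ hx => ?_⟩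
  have : NeZero n := ⟨hn⟩
  obtain ⟨c, hc⟩ := exists_int_sub_isUnit hn hx
  obtain ⟨u, hu⟩ := Fintype.exists_lt_card_fiber_of_mul_lt_card
    (fun i => (hc i).unit) (n := m - 1) (by rwa [ZMod.card_units_eq_totient, Fintype.card_fin])
  set s : Finset (Fin k) := {i | (hc i).unit = u} with hs
  let f : Fin m → Fin k := fun i => s.orderEmbOfCardLe (k := m) (by omega) i
  have hfs : ∀ i, (hc (f i)).unit = u := fun i =>
    (Finset.mem_filter.1 (s.orderEmbOfCardLe_mem (by omega) i)).2
  refine ⟨f, (s.orderEmbOfCardLe (by omega)).injective, fun i j => ?_⟩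
  have := congrArg (Units.val) ((hfs i).trans (hfs j).symm)
  simp only [IsUnit.unit_spec] at this
  rw [← ZMod.intCast_zmod_eq_zero_iff_dvd]
  push_cast at this ⊢
  simpa [sub_eq_zero] using this

lemma boxCount_congruentTuples_le (d n N : ℕ) (hn : n ≠ 0) :
    boxCount (d + 1) (congruentTuples (d + 1) n) N ≤ (2 * N + 1) * (2 * N / n + 1) ^ d := by
  have hn' : (0 : ℤ) < n := by positivity
  let Q := Finset.Icc (0 : ℤ) (2 * N / n : ℕ)
  let B := Finset.Icc (-N : ℤ) N
  have hq : ∀ z : ℤ, |z| ≤ (N : ℤ) → (z + N) / n ∈ Q := fun z hz => by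
    rw [abs_le] at hz
    refine Finset.mem_Icc.2 ⟨Int.ediv_nonneg (by linarith) hn'.le, ?_⟩
    push_cast
    exact Int.ediv_le_ediv hn' (by linarith)
  let F : {h : Fin (d + 1) → ℤ // h ∈ congruentTuples (d + 1) n ∧ ∀ i, |h i| ≤ (N : ℤ)} →
      B × (Fin d → Q) := fun h =>
    (⟨h.1 0, Finset.mem_Icc.2 (abs_le.1 (h.2.2 0))⟩,
      fun i => ⟨(h.1 i.succ + N) / n, hq _ (h.2.2 _)⟩)
  have hF : Function.Injective F := by
    rintro ⟨g, hg, hgN⟩ ⟨h, hh, hhN⟩ e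
    simp only [F, Prod.mk.injEq, Subtype.mk.injEq, funext_iff] at e
    obtain ⟨e0, e1⟩ := e
    refine Subtype.ext (funext fun i => ?_)
    refine Fin.cases e0 (fun i => ?_) i
    have hd : (h i.succ + N) ≡ (g i.succ + N) [ZMOD n] := by
      rw [Int.modEq_iff_dvd, show g i.succ + N - (h i.succ + N) =
        (g i.succ - g 0) - (h i.succ - h 0) by rw [e0]; ring]
      exact dvd_sub (hg _ _) (hh _ _)
    have h1 := Int.mul_ediv_add_emod (g i.succ + N) n
    have h2 := Int.mul_ediv_add_emod (h i.succ + N) n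
    rw [e1 i, ← hd.eq] at h1
    linarith
  have := Nat.card_le_card_of_injective F hF
  rw [boxCount]
  refine this.trans (le_of_eq ?_)
  rw [Nat.card_eq_fintype_card, Fintype.card_prod, Fintype.card_fun, Fintype.card_coe,
    Fintype.card_coe, Fintype.card_fin, Int.card_Icc, Int.card_Icc]
  congr 1
  omega

lemma lowerBoxDensity_nonneg (m : ℕ) (A : Set (Fin m → ℤ)) : 0 ≤ lowerBoxDensity m A := by
  rw [lowerBoxDensity, liminf_eq]
  by_cases hb : BddAbove {a : ℝ | ∀ᶠ N : ℕ in atTop, a ≤ (boxCount m A N : ℝ) / (2 * N) ^ m}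
  · exact le_csSup hb (Eventually.of_forall fun N => by positivity)
  · rw [Real.sSup_of_not_bddAbove hb]

lemma lowerBoxDensity_congruentTuples_le (d n : ℕ) (hn : n ≠ 0) :
    lowerBoxDensity (d + 1) (congruentTuples (d + 1) n) ≤ (1 / (n : ℝ)) ^ d := by
  have hlim : Tendsto (fun N : ℕ => (1 + (1 / 2 : ℝ) * (1 / N)) *
      (1 / (n : ℝ) + (1 / 2) * (1 / N)) ^ d) atTop (nhds ((1 / (n : ℝ)) ^ d)) := by
    have h := tendsto_one_div_atTop_nhds_zero_nat (𝕜 := ℝ)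
    have h' := ((h.const_mul (1 / 2 : ℝ)).const_add 1).mul
      (((h.const_mul (1 / 2 : ℝ)).const_add (1 / (n : ℝ))).pow d)
    simpa using h'
  rw [← hlim.liminf_eq, lowerBoxDensity]
  refine liminf_le_liminf ?_ ?_ hlim.isCoboundedUnder_ge
  · filter_upwards [eventually_gt_atTop 0] with N hN
    have hN' : (0 : ℝ) < N := by exact_mod_cast hN
    have hn' : (0 : ℝ) < n := by positivity
    have hc : (boxCount (d + 1) (congruentTuples (d + 1) n) N : ℝ) ≤
        (2 * N + 1) * (2 * N / n + 1) ^ d := by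
      have h1 : (boxCount (d + 1) (congruentTuples (d + 1) n) N : ℝ) ≤
        (2 * N + 1) * (((2 * N / n : ℕ) : ℝ) + 1) ^ d := by
        exact_mod_cast boxCount_congruentTuples_le d n N hn
      refine h1.trans ?_
      have h2 : ((2 * N / n : ℕ) : ℝ) ≤ 2 * N / n := by
        simpa using Nat.cast_div_le (α := ℝ) (m := 2 * N) (n := n)
      gcongr
    rw [div_le_iff₀ (by positivity)]
    refine hc.trans (le_of_eq ?_)
    rw [pow_succ, mul_comm ((2 * (N : ℝ)) ^ d), mul_mul_mul_comm, ← mul_pow]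
    congr 1
    · field_simp
    · congr 1
      field_simp
  · exact isBoundedUnder_of_eventually_ge (a := 0) (Eventually.of_forall fun N => by positivity)

lemma delta_le_one_div_pow {m k n : ℕ} (hm : 2 ≤ m) (hn : n ≠ 0)
    (hk : n.totient * (m - 1) < k) : delta m k ≤ (1 / (n : ℝ)) ^ (m - 1) := by
  obtain ⟨d, rfl⟩ : ∃ d, m = d + 1 := ⟨m - 1, by omega⟩
  have hbdd : BddBelow {r : ℝ | ∃ A, Plausible (d + 1) k A ∧ r = lowerBoxDensity (d + 1) A} := by
    refine ⟨0, ?_⟩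
    rintro _ ⟨A, -, rfl⟩
    exact lowerBoxDensity_nonneg _ A
  exact (csInf_le hbdd ⟨_, plausible_congruentTuples hn hk, rfl⟩).trans
    (lowerBoxDensity_congruentTuples_le d n hn)

lemma summable_log_div_sq : Summable fun n : ℕ => Real.log n / (n : ℝ) ^ 2 := by
  have hs : Summable fun n : ℕ => 2 * (1 / (n : ℝ) ^ (3 / 2 : ℝ)) :=
    (Real.summable_one_div_nat_rpow.2 (by norm_num)).mul_left 2
  refine hs.of_nonneg_of_le (fun n => div_nonneg (Real.log_natCast_nonneg n) (by positivity))
    fun n => ?_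
  rcases Nat.eq_zero_or_pos n with rfl | hn
  · simp
  have hn' : (0 : ℝ) < n := by exact_mod_cast hn
  have h1 := Real.log_le_rpow_div hn'.le (show (0 : ℝ) < 1 / 2 by norm_num)
  have h2 : (n : ℝ) ^ 2 = (n : ℝ) ^ (1 / 2 : ℝ) * (n : ℝ) ^ (3 / 2 : ℝ) := by
    rw [← Real.rpow_add hn', ← Real.rpow_natCast]
    norm_num
  have h3 : (0 : ℝ) < (n : ℝ) ^ (1 / 2 : ℝ) := by positivity
  rw [div_le_iff₀ (by positivity), h2]
  calc Real.log n ≤ (n : ℝ) ^ (1 / 2 : ℝ) / (1 / 2) := h1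
    _ = _ := by field_simp

lemma log_factorial_eq_sum_primesLE (n : ℕ) : Real.log (n.factorial : ℝ) =
    ∑ p ∈ Nat.primesLE n, (n.factorial.factorization p : ℝ) * Real.log p := by
  rw [Real.log_nat_eq_sum_factorization, Finsupp.sum]
  refine Finset.sum_subset (fun p hp => ?_) (fun p _ hp => ?_)
  · have h1 := Nat.prime_of_mem_primeFactors hp
    exact Nat.mem_primesLE.2 ⟨(h1.dvd_factorial).1 (Nat.dvd_of_mem_primeFactors hp), h1⟩
  · rw [Finsupp.notMem_support_iff.1 hp]
    simp

lemma sum_log_div_le (n : ℕ) (hn : n ≠ 0) :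
    ∑ p ∈ Nat.primesLE n, Real.log p / p ≤ Real.log n + Real.log 4 := by
  have hn' : (0 : ℝ) < n := by positivity
  have h1 : ∑ p ∈ Nat.primesLE n, ((n : ℝ) / p - 1) * Real.log p ≤ Real.log n.factorial := by
    rw [log_factorial_eq_sum_primesLE]
    refine Finset.sum_le_sum fun p hp => ?_
    obtain ⟨hpn, hp⟩ := Nat.mem_primesLE.1 hp
    refine mul_le_mul_of_nonneg_right ?_ (Real.log_natCast_nonneg p)
    have h2 : n / p ≤ n.factorial.factorization p := by
      rw [Nat.factorization_factorial hp (Nat.lt_add_one (Nat.log p n))]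
      have hlog : 1 ≤ Nat.log p n := Nat.log_pos hp.one_lt hpn
      calc n / p = n / p ^ 1 := by rw [pow_one]
        _ ≤ _ := Finset.single_le_sum (f := fun i => n / p ^ i) (fun _ _ => Nat.zero_le _)
          (Finset.mem_Ico.2 ⟨le_rfl, by omega⟩)
    have h3 := Nat.lt_div_mul_add (a := n) hp.pos
    have h4 : (n : ℝ) / p - 1 ≤ (n / p : ℕ) := by
      rw [sub_le_iff_le_add, div_le_iff₀ (by exact_mod_cast hp.pos)]
      have : n ≤ (n / p + 1) * p := by rw [add_mul, one_mul]; exact h3.le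
      exact_mod_cast this
    exact h4.trans (by exact_mod_cast h2)
  have h2 : Real.log n.factorial ≤ n * Real.log n := by
    rw [← Real.log_pow]
    refine Real.log_le_log (by positivity) ?_
    exact_mod_cast Nat.factorial_le_pow n
  have h3 : ∑ p ∈ Nat.primesLE n, Real.log p ≤ Real.log 4 * n := by
    rw [← Chebyshev.theta_eq_sum_primesLE_log]
    exact Chebyshev.theta_le_log4_mul_x hn'.le
  have h4 : ∑ p ∈ Nat.primesLE n, ((n : ℝ) / p - 1) * Real.log p =
      n * ∑ p ∈ Nat.primesLE n, Real.log p / p - ∑ p ∈ Nat.primesLE n, Real.log p := by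
    rw [Finset.mul_sum, ← Finset.sum_sub_distrib]
    exact Finset.sum_congr rfl fun p _ => by ring
  have h5 : n * ∑ p ∈ Nat.primesLE n, Real.log p / p ≤ n * (Real.log n + Real.log 4) := by
    linarith
  exact le_of_mul_le_mul_left h5 hn'

lemma le_sum_log_div (n : ℕ) (hn : n ≠ 0) :
    Real.log n - 1 - 2 * ∑' i : ℕ, Real.log i / (i : ℝ) ^ 2 ≤
      ∑ p ∈ Nat.primesLE n, Real.log p / p := by
  have hn' : (0 : ℝ) < n := by positivity
  have h1 : Real.log n.factorial ≤
      ∑ p ∈ Nat.primesLE n, n * (Real.log p / p + 2 * (Real.log p / (p : ℝ) ^ 2)) := by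
    rw [log_factorial_eq_sum_primesLE]
    refine Finset.sum_le_sum fun p hp => ?_
    obtain ⟨hpn, hp⟩ := Nat.mem_primesLE.1 hp
    have hp2 : (2 : ℝ) ≤ p := by exact_mod_cast hp.two_le
    have h2 : (n.factorial.factorization p : ℝ) ≤ n / (p - 1) := by
      refine (Nat.cast_le.2 (Nat.factorization_factorial_le_div_pred hp n)).trans ?_
      refine Nat.cast_div_le.trans ?_
      rw [Nat.cast_sub hp.one_le, Nat.cast_one]
    have h3 : (n : ℝ) / (p - 1) ≤ n * (1 / p + 2 * (1 / (p : ℝ) ^ 2)) := by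
      have : (1 : ℝ) / (p - 1) ≤ 1 / p + 2 * (1 / (p : ℝ) ^ 2) := by
        rw [div_le_iff₀ (by linarith)]
        have : (1 / (p : ℝ) + 2 * (1 / (p : ℝ) ^ 2)) * (p - 1) = 1 + (p - 2) / (p : ℝ) ^ 2 := by
          field_simp
          ring
        rw [this]
        have : 0 ≤ ((p : ℝ) - 2) / (p : ℝ) ^ 2 := div_nonneg (by linarith) (by positivity)
        linarith
      calc (n : ℝ) / (p - 1) = n * (1 / (p - 1)) := by ring
        _ ≤ _ := mul_le_mul_of_nonneg_left this hn'.le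
    calc _ ≤ n * (1 / p + 2 * (1 / (p : ℝ) ^ 2)) * Real.log p :=
          mul_le_mul_of_nonneg_right (h2.trans h3) (Real.log_natCast_nonneg p)
      _ = _ := by ring
  have h2 : n * Real.log n - n ≤ Real.log n.factorial := by
    have := Real.pow_div_factorial_le_exp n hn'.le n
    rw [div_le_iff₀ (by positivity)] at this
    have h := Real.log_le_log (by positivity) this
    rw [Real.log_mul (Real.exp_ne_zero _) (by positivity), Real.log_exp, Real.log_pow] at h
    linarith
  rw [← Finset.mul_sum, Finset.sum_add_distrib, ← Finset.mul_sum] at h1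
  have h3 : ∑ p ∈ Nat.primesLE n, Real.log p / (p : ℝ) ^ 2 ≤
      ∑' i : ℕ, Real.log i / (i : ℝ) ^ 2 :=
    summable_log_div_sq.sum_le_tsum _
      fun i _ => div_nonneg (Real.log_natCast_nonneg i) (by positivity)
  have h4 : n * (Real.log n - 1) ≤ n * (∑ p ∈ Nat.primesLE n, Real.log p / p +
      2 * ∑ p ∈ Nat.primesLE n, Real.log p / (p : ℝ) ^ 2) := by linarith
  have h5 := le_of_mul_le_mul_left h4 hn'
  linarith

/-- Mertens' first theorem, along the primes below `exp J`. -/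
lemma exists_abs_sum_log_div_sub_le : ∃ C : ℝ, ∀ J : ℕ,
    |∑ p ∈ Nat.primesBelow ⌈Real.exp J⌉₊, Real.log p / p - J| ≤ C := by
  set S := ∑' i : ℕ, Real.log i / (i : ℝ) ^ 2
  have hS : 0 ≤ S := tsum_nonneg fun i => div_nonneg (Real.log_natCast_nonneg i) (by positivity)
  have hl4 : 0 ≤ Real.log 4 := Real.log_nonneg (by norm_num)
  refine ⟨Real.log 4 + 2 + 2 * S, fun J => ?_⟩
  rcases Nat.eq_zero_or_pos J with rfl | hJ
  · simp only [Nat.cast_zero, Real.exp_zero, Nat.ceil_one, Nat.primesBelow_one, Finset.sum_empty,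
      sub_zero, abs_zero]
    linarith
  have hJ' : (1 : ℝ) ≤ J := by exact_mod_cast hJ
  have he : 2 ≤ Real.exp J := by linarith [Real.add_one_le_exp (J : ℝ)]
  set n := ⌈Real.exp J⌉₊ - 1 with hn
  have hc : ⌈Real.exp J⌉₊ = n + 1 := by
    have : 0 < ⌈Real.exp J⌉₊ := Nat.ceil_pos.2 (Real.exp_pos _)
    omega
  have hlt : (n : ℝ) < Real.exp J := Nat.lt_ceil.1 (by omega)
  have hge : Real.exp J ≤ n + 1 := by
    have := Nat.le_ceil (Real.exp J)
    rw [hc] at this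
    exact_mod_cast this
  have hn0 : (0 : ℝ) < n := by linarith
  have hn0' : n ≠ 0 := by
    rintro h
    rw [h] at hn0
    simp at hn0
  have hlog1 : Real.log n ≤ J := by
    rw [Real.log_le_iff_le_exp hn0]
    exact hlt.le
  have hlog2 : (J : ℝ) - 1 ≤ Real.log n := by
    rw [Real.le_log_iff_exp_le hn0, Real.exp_sub, div_le_iff₀ (Real.exp_pos _)]
    nlinarith [Real.add_one_le_exp (1 : ℝ)]
  rw [hc, show Nat.primesBelow (n + 1) = Nat.primesLE n from rfl, abs_le]
  have h1 := sum_log_div_le n hn0'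
  have h2 := le_sum_log_div n hn0'
  constructor <;> linarith

lemma abs_neg_log_one_sub_sub_le {v : ℝ} (h0 : 0 ≤ v) (h1 : v ≤ 1 / 2) :
    |-Real.log (1 - v) - v| ≤ 2 * v ^ 2 := by
  have h := Real.abs_log_sub_add_sum_range_le (x := v) (by rw [abs_of_nonneg h0]; linarith) 1
  simp only [Finset.sum_range_one, abs_of_nonneg h0] at h
  norm_num at h
  rw [show -Real.log (1 - v) - v = -(v + Real.log (1 - v)) by ring, abs_neg]
  refine h.trans ?_
  rw [div_le_iff₀ (by linarith)]
  nlinarith [sq_nonneg v]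

/-- The logarithm of the Euler factor of `ζ` at `p` and `s`, extended by zero to all integers. -/
noncomputable def logEulerFactor (s : ℝ) (n : ℕ) : ℝ :=
  if n.Prime then -Real.log (1 - (n : ℝ) ^ (-s)) else 0

lemma rpow_neg_le_inv {s : ℝ} (hs : 1 ≤ s) {p : ℕ} (hp : p.Prime) :
    (p : ℝ) ^ (-s) ≤ (p : ℝ)⁻¹ := by
  rw [← Real.rpow_neg_one]
  exact Real.rpow_le_rpow_of_exponent_le (by exact_mod_cast hp.one_le) (by linarith)

lemma inv_le_half {p : ℕ} (hp : p.Prime) : (p : ℝ)⁻¹ ≤ 1 / 2 := by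
  rw [one_div]
  exact inv_anti₀ (by norm_num) (by exact_mod_cast hp.two_le)

lemma abs_logEulerFactor_sub_le {s : ℝ} (hs : 1 ≤ s) {p : ℕ} (hp : p.Prime) :
    |logEulerFactor s p - (p : ℝ) ^ (-s)| ≤ 2 * ((p : ℝ) ^ (-s)) ^ 2 := by
  rw [logEulerFactor, if_pos hp]
  exact abs_neg_log_one_sub_sub_le (by positivity)
    ((rpow_neg_le_inv hs hp).trans (inv_le_half hp))

lemma logEulerFactor_nonneg {s : ℝ} (hs : 1 ≤ s) (n : ℕ) : 0 ≤ logEulerFactor s n := by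
  rw [logEulerFactor]
  split_ifs with hp
  · have h1 := (rpow_neg_le_inv hs hp).trans (inv_le_half hp)
    have h2 : 0 ≤ (n : ℝ) ^ (-s) := by positivity
    exact neg_nonneg.2 (Real.log_nonpos (by linarith) (by linarith))
  · exact le_rfl

lemma logEulerFactor_le {s : ℝ} (hs : 1 ≤ s) (n : ℕ) :
    logEulerFactor s n ≤ 2 * (n : ℝ) ^ (-s) := by
  by_cases hp : n.Prime
  · have h1 := (rpow_neg_le_inv hs hp).trans (inv_le_half hp)
    have h2 : 0 ≤ (n : ℝ) ^ (-s) := by positivity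
    have h3 := (abs_le.1 (abs_logEulerFactor_sub_le hs hp)).2
    nlinarith
  · rw [logEulerFactor, if_neg hp]
    positivity

lemma summable_logEulerFactor {s : ℝ} (hs : 1 < s) : Summable (logEulerFactor s) :=
  ((Real.summable_nat_rpow.2 (by linarith)).mul_left 2).of_nonneg_of_le
    (logEulerFactor_nonneg hs.le) (logEulerFactor_le hs.le)

lemma exp_tsum_logEulerFactor {s : ℝ} (hs : 1 < s) :
    Real.exp (∑' n, logEulerFactor s n) = ∑' n : ℕ, 1 / (n : ℝ) ^ s := by
  let f : ℕ →*₀ ℝ :=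
    { toFun := fun n => (n : ℝ) ^ (-s)
      map_zero' := by simp [Real.zero_rpow (show -s ≠ 0 by linarith)]
      map_one' := by simp
      map_mul' := fun a b => by
        rw [Nat.cast_mul, Real.mul_rpow (Nat.cast_nonneg a) (Nat.cast_nonneg b)] }
  have hf : ∀ n : ℕ, f n = (n : ℝ) ^ (-s) := fun n => rfl
  have hsum : Summable fun n => ‖f n‖ := by
    simp only [hf]
    exact (Real.summable_nat_rpow.2 (by linarith)).norm
  have h1 := EulerProduct.eulerProduct_completely_multiplicative_hasProd hsum
  have h2 := ((summable_logEulerFactor hs).subtype {p | p.Prime}).hasSum.rexp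
  have h3 : ∀ p : Nat.Primes, (1 - f p)⁻¹ = Real.exp (logEulerFactor s p) := fun p => by
    have hp := (rpow_neg_le_inv hs.le p.2).trans (inv_le_half p.2)
    rw [logEulerFactor, if_pos p.2, Real.exp_neg, Real.exp_log (by linarith), hf]
  have h4 : ∑' p : {p : ℕ | p.Prime}, logEulerFactor s p = ∑' n, logEulerFactor s n := by
    refine tsum_subtype_eq_of_support_subset fun n hn => ?_
    by_contra hp
    exact hn (if_neg hp)
  have h5 : HasProd (fun p : Nat.Primes => (1 - f p)⁻¹)
      (Real.exp (∑' n, logEulerFactor s n)) := by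
    rw [← h4, funext h3]
    exact h2
  rw [h5.unique h1]
  exact tsum_congr fun n => by rw [hf, Real.rpow_neg (Nat.cast_nonneg n), one_div]

open scoped Topology in
lemma tendsto_tsum_logEulerFactor_add_log :
    Tendsto (fun σ : ℝ => ∑' n, logEulerFactor (1 + σ) n + Real.log σ) (𝓝[>] 0) (𝓝 0) := by
  have h1 : Tendsto (fun σ : ℝ => 1 + σ) (𝓝[>] 0) (𝓝[>] 1) := by
    refine tendsto_nhdsWithin_iff.2 ⟨?_, ?_⟩
    · have : Tendsto (fun σ : ℝ => 1 + σ) (𝓝 0) (𝓝 (1 + 0)) := (continuous_const_add 1).tendsto 0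
      rw [add_zero] at this
      exact this.mono_left nhdsWithin_le_nhds
    · filter_upwards [self_mem_nhdsWithin] with σ hσ
      simpa using hσ
  have h2 := (tendsto_sub_mul_tsum_nat_rpow.comp h1).log one_ne_zero
  rw [Real.log_one] at h2
  refine h2.congr' ?_
  filter_upwards [self_mem_nhdsWithin] with σ hσ
  have hσ' : 0 < σ := hσ
  simp only [Function.comp_apply, add_sub_cancel_left]
  rw [← exp_tsum_logEulerFactor (by linarith), Real.log_mul hσ'.ne' (Real.exp_ne_zero _),
    Real.log_exp, add_comm]

lemma rpow_neg_one_add (p : ℕ) (hp : p.Prime) (σ : ℝ) :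
    (p : ℝ) ^ (-(1 + σ)) = (p : ℝ) ^ (-1 : ℝ) * (p : ℝ) ^ (-σ) := by
  rw [← Real.rpow_add (by exact_mod_cast hp.pos)]
  congr 1
  ring

lemma rpow_neg_le_one {p : ℕ} (hp : p.Prime) {σ : ℝ} (hσ : 0 ≤ σ) : (p : ℝ) ^ (-σ) ≤ 1 :=
  Real.rpow_le_one_of_one_le_of_nonpos (by exact_mod_cast hp.one_le) (by linarith)

lemma summable_logEulerFactor_one_mul_rpow {σ : ℝ} (hσ : 0 < σ) :
    Summable fun n : ℕ => logEulerFactor 1 n * (n : ℝ) ^ (-σ) := by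
  refine ((Real.summable_nat_rpow.2 (show -(1 + σ) < -1 by linarith)).mul_left 2).of_nonneg_of_le
    (fun n => mul_nonneg (logEulerFactor_nonneg le_rfl n) (by positivity)) fun n => ?_
  by_cases hp : n.Prime
  · rw [rpow_neg_one_add n hp, ← mul_assoc]
    exact mul_le_mul_of_nonneg_right (logEulerFactor_le le_rfl n) (by positivity)
  · rw [logEulerFactor, if_neg hp, zero_mul]
    positivity

open scoped Topology in
lemma tendsto_tsum_logEulerFactor_one_mul_rpow_add_log :
    Tendsto (fun σ : ℝ => ∑' n : ℕ, logEulerFactor 1 n * (n : ℝ) ^ (-σ) + Real.log σ)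
      (𝓝[>] 0) (𝓝 0) := by
  have hd : Tendsto (fun σ : ℝ => ∑' n : ℕ, (logEulerFactor 1 n * (n : ℝ) ^ (-σ) -
      logEulerFactor (1 + σ) n)) (𝓝[>] 0) (𝓝 (∑' _ : ℕ, (0 : ℝ))) := by
    refine tendsto_tsum_of_dominated_convergence (bound := fun n : ℕ => 4 * (1 / (n : ℝ) ^ 2))
      ((Real.summable_one_div_nat_pow.2 (by norm_num)).mul_left 4) (fun n => ?_) ?_
    · by_cases hp : n.Prime
      · have hp0 : (n : ℝ) ≠ 0 := by exact_mod_cast hp.ne_zero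
        have hp1 : 1 - (n : ℝ) ^ (-(1 + 0) : ℝ) ≠ 0 := by
          have := (rpow_neg_le_inv (s := 1 + 0) (by norm_num) hp).trans (inv_le_half hp)
          refine sub_ne_zero.2 fun h => ?_
          rw [← h] at this
          norm_num at this
        simp only [logEulerFactor, if_pos hp]
        have hc : ContinuousAt (fun σ : ℝ => -Real.log (1 - (n : ℝ) ^ (-1 : ℝ)) * (n : ℝ) ^ (-σ) -
            -Real.log (1 - (n : ℝ) ^ (-(1 + σ)))) 0 := by
          have e1 : ContinuousAt (fun σ : ℝ => (n : ℝ) ^ (-σ)) 0 :=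
            (Real.continuousAt_const_rpow hp0).comp (f := fun σ : ℝ => -σ) (by fun_prop)
          have e2 : ContinuousAt (fun σ : ℝ => (n : ℝ) ^ (-(1 + σ))) 0 :=
            (Real.continuousAt_const_rpow hp0).comp (f := fun σ : ℝ => -(1 + σ)) (by fun_prop)
          exact (continuousAt_const.mul e1).sub ((continuousAt_const.sub e2).log hp1).neg
        have := hc.tendsto.mono_left (nhdsWithin_le_nhds (s := Set.Ioi 0))
        simpa using this
      · simp [logEulerFactor, hp]
    · filter_upwards [self_mem_nhdsWithin] with σ hσ n
      have hσ' : 0 < σ := hσ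
      by_cases hp : n.Prime
      · have h1 := abs_logEulerFactor_sub_le (le_refl (1 : ℝ)) hp
        have h2 := abs_logEulerFactor_sub_le (show 1 ≤ 1 + σ by linarith) hp
        have h3 := rpow_neg_le_inv (show 1 ≤ 1 + σ by linarith) hp
        have h4 := rpow_neg_le_one hp hσ'.le
        have h5 : (0 : ℝ) ≤ (n : ℝ) ^ (-σ) := by positivity
        have h6 : (0 : ℝ) ≤ (n : ℝ) ^ (-(1 + σ)) := by positivity
        have e : logEulerFactor 1 n * (n : ℝ) ^ (-σ) - logEulerFactor (1 + σ) n =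
            (logEulerFactor 1 n - (n : ℝ) ^ (-1 : ℝ)) * (n : ℝ) ^ (-σ) -
              (logEulerFactor (1 + σ) n - (n : ℝ) ^ (-(1 + σ))) := by
          rw [rpow_neg_one_add n hp]
          ring
        rw [e, Real.norm_eq_abs]
        refine (abs_sub _ _).trans ?_
        rw [abs_mul, abs_of_nonneg h5]
        have h7 : (n : ℝ) ^ (-1 : ℝ) = (n : ℝ)⁻¹ := Real.rpow_neg_one _
        rw [h7] at h1 ⊢
        have h8 : |logEulerFactor 1 n - (n : ℝ)⁻¹| * (n : ℝ) ^ (-σ) ≤ 2 * ((n : ℝ)⁻¹) ^ 2 :=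
          (mul_le_of_le_one_right (abs_nonneg _) h4).trans h1
        have h9 : ((n : ℝ) ^ (-(1 + σ))) ^ 2 ≤ ((n : ℝ)⁻¹) ^ 2 := pow_le_pow_left₀ h6 h3 2
        rw [one_div, ← inv_pow]
        linarith
      · simp [logEulerFactor, hp]
  rw [tsum_zero] at hd
  have h := hd.add tendsto_tsum_logEulerFactor_add_log
  rw [add_zero] at h
  refine h.congr' ?_
  filter_upwards [self_mem_nhdsWithin] with σ hσ
  have hσ' : 0 < σ := hσ
  rw [(summable_logEulerFactor_one_mul_rpow hσ').tsum_sub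
    (summable_logEulerFactor (show 1 < 1 + σ by linarith))]
  ring

/-- The primes `p` with `⌊log p⌋ = j`. -/
noncomputable def primeBlock (j : ℕ) : Finset ℕ :=
  {p ∈ Nat.primesBelow ⌈Real.exp ((j + 1 : ℕ) : ℝ)⌉₊ | ⌊Real.log p⌋₊ = j}

lemma lt_ceil_exp_iff {p : ℕ} (hp : p.Prime) {J : ℕ} (hJ : J ≠ 0) :
    p < ⌈Real.exp J⌉₊ ↔ ⌊Real.log p⌋₊ < J := by
  rw [Nat.lt_ceil, Nat.floor_lt' hJ, Real.log_lt_iff_lt_exp (by exact_mod_cast hp.pos)]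

lemma mem_primeBlock {p j : ℕ} : p ∈ primeBlock j ↔ p.Prime ∧ ⌊Real.log p⌋₊ = j := by
  rw [primeBlock, Finset.mem_filter, Nat.mem_primesBelow]
  constructor
  · rintro ⟨⟨-, hp⟩, h⟩
    exact ⟨hp, h⟩
  · rintro ⟨hp, h⟩
    exact ⟨⟨(lt_ceil_exp_iff hp (Nat.succ_ne_zero j)).2 (by omega), hp⟩, h⟩

lemma sum_range_sum_primeBlock (f : ℕ → ℝ) (J : ℕ) :
    ∑ j ∈ Finset.range J, ∑ p ∈ primeBlock j, f p = ∑ p ∈ Nat.primesBelow ⌈Real.exp J⌉₊, f p := by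
  rcases eq_or_ne J 0 with rfl | hJ
  · simp
  rw [← Finset.sum_fiberwise_of_maps_to (s := Nat.primesBelow ⌈Real.exp J⌉₊)
    (g := fun p : ℕ => ⌊Real.log p⌋₊) (t := Finset.range J) (fun p hp => ?_)]
  · refine Finset.sum_congr rfl fun j hj => Finset.sum_congr (Finset.ext fun p => ?_) fun _ _ => rfl
    rw [mem_primeBlock, Finset.mem_filter, Nat.mem_primesBelow]
    constructor
    · rintro ⟨hp, h⟩
      exact ⟨⟨(lt_ceil_exp_iff hp hJ).2 (by rw [h]; exact Finset.mem_range.1 hj), hp⟩, h⟩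
    · rintro ⟨⟨-, hp⟩, h⟩
      exact ⟨hp, h⟩
  · obtain ⟨h1, hp⟩ := Nat.mem_primesBelow.1 hp
    exact Finset.mem_range.2 ((lt_ceil_exp_iff hp hJ).1 h1)

lemma hasSum_sum_primeBlock {f : ℕ → ℝ} (hf : Summable f) (h0 : ∀ n, ¬ n.Prime → f n = 0) :
    HasSum (fun j => ∑ p ∈ primeBlock j, f p) (∑' n, f n) := by
  have h := hf.hasSum.tsum_fiberwise fun n : ℕ => ⌊Real.log n⌋₊
  suffices e : (fun j => ∑ p ∈ primeBlock j, f p) =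
      fun j => ∑' n : ((fun n : ℕ => ⌊Real.log n⌋₊) ⁻¹' {j}), f n by
    rw [e]
    exact h
  funext j
  rw [tsum_subtype ((fun n : ℕ => ⌊Real.log n⌋₊) ⁻¹' {j}) f, tsum_eq_sum (s := primeBlock j)]
  · refine Finset.sum_congr rfl fun p hp => ?_
    rw [Set.indicator_of_mem]
    exact (mem_primeBlock.1 hp).2
  · intro n hn
    by_cases hp : n.Prime
    · have hnj : n ∉ (fun n : ℕ => ⌊Real.log n⌋₊) ⁻¹' {j} := fun h => hn (mem_primeBlock.2 ⟨hp, h⟩)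
      exact Set.indicator_of_notMem hnj f
    · exact Set.indicator_apply_eq_zero.2 fun _ => h0 n hp

lemma abs_sum_primeBlock_sub_le (j : ℕ) :
    |∑ p ∈ primeBlock j, logEulerFactor 1 p - (∑ p ∈ primeBlock j, Real.log p / p) / (j + 1)| ≤
      ∑ p ∈ primeBlock j, (if p.Prime then 2 * (1 / (p : ℝ) ^ 2) else 0) +
        3 / ((j : ℝ) + 1) ^ 2 * ∑ p ∈ primeBlock j, Real.log p / p := by
  rw [Finset.sum_div, ← Finset.sum_sub_distrib, Finset.mul_sum, ← Finset.sum_add_distrib]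
  refine (Finset.abs_sum_le_sum_abs _ _).trans (Finset.sum_le_sum fun p hp => ?_)
  obtain ⟨hp, hj⟩ := mem_primeBlock.1 hp
  have hp0 : (0 : ℝ) < p := by exact_mod_cast hp.pos
  have hlog := Real.log_natCast_nonneg p
  have h1 : (j : ℝ) ≤ Real.log p := by
    rw [← hj]
    exact Nat.floor_le hlog
  have h2 : Real.log p ≤ j + 1 := by
    rw [← hj]
    exact (Nat.lt_floor_add_one _).le
  have h3 : (j : ℝ) + 1 ≤ 3 * Real.log p := by
    have : Real.log 2 ≤ Real.log p :=
      Real.log_le_log (by norm_num) (by exact_mod_cast hp.two_le)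
    linarith [Real.log_two_gt_d9]
  have h4 := abs_logEulerFactor_sub_le (le_refl (1 : ℝ)) hp
  rw [Real.rpow_neg_one, inv_pow, ← one_div ((p : ℝ) ^ 2)] at h4
  rw [if_pos hp]
  have h5 : |(p : ℝ)⁻¹ - Real.log p / p / (j + 1)| ≤ 3 / ((j : ℝ) + 1) ^ 2 * (Real.log p / p) := by
    have e : (p : ℝ)⁻¹ - Real.log p / p / (j + 1) = (p : ℝ)⁻¹ * ((j + 1 - Real.log p) / (j + 1)) := by
      field_simp
    have hr : 0 ≤ (j + 1 - Real.log p) / ((j : ℝ) + 1) := div_nonneg (by linarith) (by positivity)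
    rw [e, abs_of_nonneg (mul_nonneg (by positivity) hr)]
    have e2 : 3 / ((j : ℝ) + 1) ^ 2 * (Real.log p / p) =
        (p : ℝ)⁻¹ * (3 * Real.log p / (j + 1) / (j + 1)) := by
      field_simp
    rw [e2]
    refine mul_le_mul_of_nonneg_left ?_ (by positivity)
    refine div_le_div_of_nonneg_right ?_ (by positivity)
    rw [le_div_iff₀ (by positivity)]
    nlinarith
  calc |logEulerFactor 1 p - Real.log p / p / (j + 1)|
      = |(logEulerFactor 1 p - (p : ℝ)⁻¹) + ((p : ℝ)⁻¹ - Real.log p / p / (j + 1))| := by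
        congr 1
        ring
    _ ≤ _ := (abs_add_le _ _).trans (add_le_add h4 h5)

open scoped Topology in
lemma exists_tendsto_sum_primeBlock_sub : ∃ d : ℝ, Tendsto (fun J => ∑ j ∈ Finset.range J,
    (∑ p ∈ primeBlock j, logEulerFactor 1 p - 1 / ((j : ℝ) + 1))) atTop (𝓝 d) := by
  obtain ⟨C, hC⟩ := exists_abs_sum_log_div_sub_le
  set B : ℕ → ℝ := fun j => ∑ p ∈ primeBlock j, Real.log p / p with hB
  have hpartial : ∀ J, ‖∑ j ∈ Finset.range J, (B j - 1)‖ ≤ C := fun J => by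
    rw [Finset.sum_sub_distrib, hB, sum_range_sum_primeBlock, Real.norm_eq_abs]
    simpa using hC J
  have hBle : ∀ j, B j ≤ 2 * C + 1 := fun j => by
    have h1 := (abs_le.1 (hpartial (j + 1))).2
    have h2 := (abs_le.1 (hpartial j)).1
    rw [Finset.sum_range_succ] at h1
    linarith
  obtain ⟨d₁, hd₁⟩ := cauchySeq_tendsto_of_complete
    (Antitone.cauchySeq_series_mul_of_tendsto_zero_of_bounded (f := fun j : ℕ => 1 / ((j : ℝ) + 1))
      (fun i j hij => one_div_le_one_div_of_le (by positivity) (by gcongr))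
      tendsto_one_div_add_atTop_nhds_zero_nat hpartial)
  have hs : Summable fun j : ℕ => ∑ p ∈ primeBlock j, logEulerFactor 1 p - B j / (j + 1) := by
    have hs1 : Summable fun n : ℕ => if n.Prime then 2 * (1 / (n : ℝ) ^ 2) else 0 := by
      refine ((Real.summable_one_div_nat_pow.2 (show 1 < 2 by norm_num)).mul_left
        2).of_nonneg_of_le (fun n => ?_) (fun n => ?_)
      · split_ifs <;> positivity
      · split_ifs
        · exact le_rfl
        · positivity
    have hs2 : Summable fun j : ℕ => 3 / ((j : ℝ) + 1) ^ 2 * (2 * C + 1) := by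
      have := (summable_nat_add_iff 1).2 (Real.summable_one_div_nat_pow.2 (show 1 < 2 by norm_num))
      refine (this.mul_left (3 * (2 * C + 1))).congr fun j => ?_
      push_cast
      ring
    refine Summable.of_norm_bounded
      ((hasSum_sum_primeBlock hs1 fun n hn => if_neg hn).summable.add hs2) fun j => ?_
    exact (abs_sum_primeBlock_sub_le j).trans
      (add_le_add_right (mul_le_mul_of_nonneg_left (hBle j) (by positivity)) _)
  refine ⟨∑' j : ℕ, (∑ p ∈ primeBlock j, logEulerFactor 1 p - B j / (j + 1)) + d₁,
    (hs.hasSum.tendsto_sum_nat.add hd₁).congr fun J => ?_⟩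
  rw [← Finset.sum_add_distrib]
  refine Finset.sum_congr rfl fun j _ => ?_
  rw [smul_eq_mul]
  ring

open scoped Topology in
lemma tendsto_log_one_sub_exp_neg_sub_log :
    Tendsto (fun σ : ℝ => Real.log (1 - Real.exp (-σ)) - Real.log σ) (𝓝[>] 0) (𝓝 0) := by
  have hd : HasDerivAt (fun σ : ℝ => 1 - Real.exp (-σ)) 1 0 := by
    simpa using ((hasDerivAt_neg (0 : ℝ)).exp).const_sub 1
  have h := (hasDerivAt_iff_tendsto_slope_zero.1 hd).mono_left
    (nhdsWithin_mono 0 (fun x hx => ne_of_gt hx : Set.Ioi (0 : ℝ) ⊆ {0}ᶜ))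
  have h' := h.log one_ne_zero
  rw [Real.log_one] at h'
  refine h'.congr' ?_
  filter_upwards [self_mem_nhdsWithin] with σ hσ
  have hσ' : 0 < σ := hσ
  have : Real.exp (-σ) < 1 := Real.exp_lt_one_iff.2 (by linarith)
  simp only [zero_add, neg_zero, Real.exp_zero, sub_self, sub_zero, smul_eq_mul]
  rw [Real.log_mul (inv_ne_zero hσ'.ne') (by linarith), Real.log_inv]
  ring

lemma exp_neg_pow_floor_bounds {p : ℕ} (hp : p.Prime) {σ : ℝ} (hσ : 0 < σ) :
    Real.exp (-σ) * (p : ℝ) ^ (-σ) ≤ Real.exp (-σ) ^ (⌊Real.log p⌋₊ + 1) ∧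
      Real.exp (-σ) ^ (⌊Real.log p⌋₊ + 1) ≤ (p : ℝ) ^ (-σ) := by
  have hlog := Real.log_natCast_nonneg p
  have h1 := Nat.floor_le hlog
  have h2 := Nat.lt_floor_add_one (Real.log p)
  rw [← Real.exp_nat_mul, Real.rpow_def_of_pos (by exact_mod_cast hp.pos), ← Real.exp_add]
  push_cast
  constructor <;> refine Real.exp_le_exp.2 ?_ <;> nlinarith

open scoped Topology in
lemma tendsto_tsum_logEulerFactor_one_mul_pow_add_log :
    Tendsto (fun σ : ℝ => ∑' n : ℕ, logEulerFactor 1 n * Real.exp (-σ) ^ (⌊Real.log n⌋₊ + 1) +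
      Real.log (1 - Real.exp (-σ))) (𝓝[>] 0) (𝓝 0) := by
  set T : ℝ → ℝ := fun σ => ∑' n : ℕ, logEulerFactor 1 n * (n : ℝ) ^ (-σ) with hT
  set Q : ℝ → ℝ := fun σ =>
    ∑' n : ℕ, logEulerFactor 1 n * Real.exp (-σ) ^ (⌊Real.log n⌋₊ + 1) with hQ
  have hTlog : Tendsto (fun σ => T σ + Real.log σ) (𝓝[>] 0) (𝓝 0) :=
    tendsto_tsum_logEulerFactor_one_mul_rpow_add_log
  have hσT : Tendsto (fun σ => σ * T σ) (𝓝[>] 0) (𝓝 0) := by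
    have h1 : Tendsto (fun σ : ℝ => σ) (𝓝[>] 0) (𝓝 0) := tendsto_id.mono_left nhdsWithin_le_nhds
    have h2 : Tendsto (fun σ : ℝ => σ * Real.log σ) (𝓝[>] 0) (𝓝 0) := by
      have := Real.continuous_mul_log.tendsto 0
      simp only [zero_mul] at this
      exact this.mono_left nhdsWithin_le_nhds
    have h3 := (h1.mul hTlog).sub h2
    simp only [mul_zero, sub_zero] at h3
    exact h3.congr fun σ => by ring
  have hbounds : ∀ σ : ℝ, 0 < σ → Q σ ≤ T σ ∧ T σ - σ * T σ ≤ Q σ := fun σ hσ => by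
    have hsT := summable_logEulerFactor_one_mul_rpow hσ
    have hle : ∀ n : ℕ, logEulerFactor 1 n * Real.exp (-σ) ^ (⌊Real.log n⌋₊ + 1) ≤
        logEulerFactor 1 n * (n : ℝ) ^ (-σ) := fun n => by
      by_cases hp : n.Prime
      · exact mul_le_mul_of_nonneg_left (exp_neg_pow_floor_bounds hp hσ).2
          (logEulerFactor_nonneg le_rfl n)
      · simp [logEulerFactor, hp]
    have hge : ∀ n : ℕ, Real.exp (-σ) * (logEulerFactor 1 n * (n : ℝ) ^ (-σ)) ≤
        logEulerFactor 1 n * Real.exp (-σ) ^ (⌊Real.log n⌋₊ + 1) := fun n => by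
      by_cases hp : n.Prime
      · rw [mul_left_comm]
        exact mul_le_mul_of_nonneg_left (exp_neg_pow_floor_bounds hp hσ).1
          (logEulerFactor_nonneg le_rfl n)
      · simp [logEulerFactor, hp]
    have hsQ := hsT.of_nonneg_of_le
      (fun n => mul_nonneg (logEulerFactor_nonneg le_rfl n) (by positivity)) hle
    refine ⟨hsQ.tsum_le_tsum hle hsT, ?_⟩
    have h1 := (hsT.mul_left (Real.exp (-σ))).tsum_le_tsum hge hsQ
    rw [tsum_mul_left] at h1
    have h2 : 0 ≤ T σ :=
      tsum_nonneg fun n => mul_nonneg (logEulerFactor_nonneg le_rfl n) (by positivity)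
    have h3 := Real.add_one_le_exp (-σ)
    calc T σ - σ * T σ = (-σ + 1) * T σ := by ring
      _ ≤ Real.exp (-σ) * T σ := mul_le_mul_of_nonneg_right h3 h2
      _ ≤ Q σ := h1
  have hQT : Tendsto (fun σ => Q σ - T σ) (𝓝[>] 0) (𝓝 0) := by
    have hneg := hσT.neg
    rw [neg_zero] at hneg
    refine tendsto_of_tendsto_of_tendsto_of_le_of_le' hneg tendsto_const_nhds ?_ ?_ <;>
    filter_upwards [self_mem_nhdsWithin] with σ hσ
    · linarith [(hbounds σ hσ).2]
    · linarith [(hbounds σ hσ).1]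
  have h := (hQT.add hTlog).add tendsto_log_one_sub_exp_neg_sub_log
  simp only [add_zero] at h
  exact h.congr fun σ => by ring

open scoped Topology in
lemma tendsto_sum_primeBlock_sub : Tendsto (fun J => ∑ j ∈ Finset.range J,
    (∑ p ∈ primeBlock j, logEulerFactor 1 p - 1 / ((j : ℝ) + 1))) atTop (𝓝 0) := by
  obtain ⟨d, hd⟩ := exists_tendsto_sum_primeBlock_sub
  have hexp : Tendsto (fun σ : ℝ => Real.exp (-σ)) (𝓝[>] 0) (𝓝[<] 1) := by
    refine tendsto_nhdsWithin_iff.2 ⟨?_, ?_⟩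
    · have : Tendsto (fun σ : ℝ => Real.exp (-σ)) (𝓝 0) (𝓝 (Real.exp (-0))) :=
        (Real.continuous_exp.comp continuous_neg).tendsto 0
      rw [neg_zero, Real.exp_zero] at this
      exact this.mono_left nhdsWithin_le_nhds
    · filter_upwards [self_mem_nhdsWithin] with σ hσ
      exact Real.exp_lt_one_iff.2 (neg_lt_zero.2 hσ)
  have h1 := (Real.tendsto_tsum_powerSeries_nhdsWithin_lt hd).comp hexp
  have h2 := h1.mul (hexp.mono_right nhdsWithin_le_nhds)
  rw [mul_one] at h2
  have h3 : d = 0 := by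
    refine tendsto_nhds_unique (h2.congr' ?_) tendsto_tsum_logEulerFactor_one_mul_pow_add_log
    filter_upwards [self_mem_nhdsWithin] with σ hσ
    have hσ' : 0 < σ := hσ
    have hz0 : 0 < Real.exp (-σ) := Real.exp_pos _
    have hz1 : Real.exp (-σ) < 1 := Real.exp_lt_one_iff.2 (by linarith)
    set z := Real.exp (-σ) with hz
    have hsum : Summable fun n : ℕ => logEulerFactor 1 n * z ^ (⌊Real.log n⌋₊ + 1) := by
      refine (summable_logEulerFactor_one_mul_rpow hσ').of_nonneg_of_le
        (fun n => mul_nonneg (logEulerFactor_nonneg le_rfl n) (by positivity)) fun n => ?_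
      by_cases hp : n.Prime
      · exact mul_le_mul_of_nonneg_left (exp_neg_pow_floor_bounds hp hσ').2
          (logEulerFactor_nonneg le_rfl n)
      · simp [logEulerFactor, hp]
    have hb := hasSum_sum_primeBlock hsum fun n hn => by simp [logEulerFactor, hn]
    have hl := Real.hasSum_pow_div_log_of_abs_lt_one (x := z) (by rwa [abs_of_pos hz0])
    have ht := (hb.sub hl).tsum_eq
    rw [sub_neg_eq_add] at ht
    rw [← ht, Function.comp_apply, ← tsum_mul_right]
    refine tsum_congr fun j => ?_
    have : ∑ p ∈ primeBlock j, logEulerFactor 1 p * z ^ (⌊Real.log p⌋₊ + 1) =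
        (∑ p ∈ primeBlock j, logEulerFactor 1 p) * z ^ (j + 1) := by
      rw [Finset.sum_mul]
      exact Finset.sum_congr rfl fun p hp => by rw [(mem_primeBlock.1 hp).2]
    rw [this]
    ring
  rwa [h3] at hd

open scoped Topology in
/-- Mertens' third theorem, along the primes below `exp J`. -/
theorem tendsto_sum_primesBelow_logEulerFactor_sub_log :
    Tendsto (fun J : ℕ => ∑ p ∈ Nat.primesBelow ⌈Real.exp J⌉₊, logEulerFactor 1 p - Real.log J)
      atTop (𝓝 Real.eulerMascheroniConstant) := by
  have h := tendsto_sum_primeBlock_sub.add Real.tendsto_harmonic_sub_log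
  rw [zero_add] at h
  refine h.congr fun J => ?_
  rw [Finset.sum_sub_distrib, sum_range_sum_primeBlock, harmonic]
  push_cast
  simp only [one_div]
  ring

lemma totient_mul_le (a b : ℕ) : (a * b).totient ≤ a.totient * b := by
  induction b using induction_on_primes with
  | zero => simp
  | one => simp
  | prime_mul p b hp ih =>
    rw [mul_left_comm a, mul_left_comm a.totient]
    refine le_trans ?_ (Nat.mul_le_mul_left p ih)
    by_cases h : p ∣ a * b
    · rw [Nat.totient_mul_of_prime_of_dvd hp h]
    · rw [Nat.totient_mul_of_prime_of_not_dvd hp h]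
      exact Nat.mul_le_mul_right _ (Nat.sub_le p 1)

lemma totient_primorial_eq (n : ℕ) : ((primorial n).totient : ℝ) =
    primorial n * Real.exp (-∑ p ∈ Nat.primesLE n, logEulerFactor 1 p) := by
  have h : ((primorial n).totient : ℝ) =
      primorial n * ∏ p ∈ (primorial n).primeFactors, (1 - (p : ℝ)⁻¹) := by
    have := congrArg (Rat.cast (K := ℝ)) (Nat.totient_eq_mul_prod_factors (primorial n))
    push_cast at this
    exact this
  rw [h, primeFactors_primorial, ← Finset.sum_neg_distrib, Real.exp_sum]
  congr 1
  refine Finset.prod_congr rfl fun p hp => ?_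
  have hp := (Nat.mem_primesLE.1 hp).2
  have := inv_le_half hp
  rw [logEulerFactor, if_pos hp, neg_neg, Real.rpow_neg_one, Real.exp_log (by linarith)]

/-- Integers `n = primorial (⌈exp J⌉₊ - 1) * r` with `φ n < x` and `n` nearly as large as possible. -/
lemma exists_totient_lt_and_le (x : ℝ) (hx : 0 < x) (J : ℕ) :
    ∃ n : ℕ, (n.totient : ℝ) < x ∧
      x * Real.exp (∑ p ∈ Nat.primesBelow ⌈Real.exp J⌉₊, logEulerFactor 1 p) -
        Real.exp (Real.log 4 * Real.exp J) ≤ n := by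
  set N := ⌈Real.exp J⌉₊ - 1 with hN
  have hc : ⌈Real.exp J⌉₊ = N + 1 := by
    have : 0 < ⌈Real.exp J⌉₊ := Nat.ceil_pos.2 (Real.exp_pos _)
    omega
  have hlt : (N : ℝ) < Real.exp J := Nat.lt_ceil.1 (by omega)
  rw [hc, show Nat.primesBelow (N + 1) = Nat.primesLE N from rfl]
  set L := ∑ p ∈ Nat.primesLE N, logEulerFactor 1 p
  set P := primorial N with hP
  have hP0 : 0 < P := primorial_pos N
  have hφ0 : (0 : ℝ) < P.totient := by exact_mod_cast Nat.totient_pos.2 hP0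
  have hφ : (P.totient : ℝ) = P * Real.exp (-L) := totient_primorial_eq N
  have hPle : (P : ℝ) ≤ Real.exp (Real.log 4 * Real.exp J) := by
    calc (P : ℝ) ≤ (4 : ℝ) ^ N := by exact_mod_cast primorial_le_four_pow N
      _ = Real.exp (Real.log 4 * N) := by
        rw [mul_comm, Real.exp_nat_mul, Real.exp_log (by norm_num)]
      _ ≤ _ := Real.exp_le_exp.2 (mul_le_mul_of_nonneg_left hlt.le (Real.log_nonneg (by norm_num)))
  set r := ⌈x / P.totient⌉₊ - 1 with hr
  have hrc : ⌈x / P.totient⌉₊ = r + 1 := by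
    have : 0 < ⌈x / P.totient⌉₊ := Nat.ceil_pos.2 (div_pos hx hφ0)
    omega
  have hr1 : (r : ℝ) < x / P.totient := Nat.lt_ceil.1 (by omega)
  have hr2 : x / P.totient ≤ r + 1 := by
    have := Nat.le_ceil (x / P.totient)
    rw [hrc] at this
    exact_mod_cast this
  refine ⟨P * r, ?_, ?_⟩
  · have h1 : ((P * r).totient : ℝ) ≤ P.totient * r := by exact_mod_cast totient_mul_le P r
    rw [lt_div_iff₀ hφ0] at hr1
    linarith
  · have h1 : x * Real.exp L = P * (x / P.totient) := by
      rw [hφ, Real.exp_neg]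
      field_simp
    have h2 : (P : ℝ) * (x / P.totient) ≤ P * (r + 1) :=
      mul_le_mul_of_nonneg_left hr2 (Nat.cast_nonneg P)
    rw [h1]
    push_cast
    linarith

open scoped Topology in
lemma tendsto_floor_sub_const_div (c : ℝ) :
    Tendsto (fun y : ℝ => (⌊y - c⌋₊ : ℝ) / y) atTop (𝓝 1) := by
  have h0 : Tendsto (fun y : ℝ => y - c) atTop atTop := tendsto_atTop_add_const_right _ _ tendsto_id
  have h1 := (tendsto_nat_floor_div_atTop (R := ℝ)).comp h0
  have h2 : Tendsto (fun y : ℝ => 1 - c * y⁻¹) atTop (𝓝 1) := by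
    simpa using (tendsto_inv_atTop_zero.const_mul c).const_sub 1
  have h3 := h1.mul h2
  rw [mul_one] at h3
  refine h3.congr' ?_
  filter_upwards [eventually_gt_atTop 0, eventually_gt_atTop c] with y hy hyc
  have : y - c ≠ 0 := by linarith
  simp only [Function.comp_apply]
  field_simp

open scoped Topology in
lemma eventually_exists_totient_lt (ε : ℝ) (hε : 0 < ε) : ∀ᶠ x : ℝ in atTop,
    ∃ n : ℕ, n ≠ 0 ∧ (n.totient : ℝ) < x ∧
      1 / (n : ℝ) ≤ (Real.exp (-Real.eulerMascheroniConstant) + ε) /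
        (x * Real.log (Real.log x)) := by
  set g := Real.eulerMascheroniConstant
  set L : ℕ → ℝ := fun J => ∑ p ∈ Nat.primesBelow ⌈Real.exp J⌉₊, logEulerFactor 1 p
  set J : ℝ → ℕ := fun y => ⌊y - Real.log 4⌋₊
  have hJ : Tendsto J atTop atTop :=
    tendsto_nat_floor_atTop.comp (tendsto_atTop_add_const_right _ _ tendsto_id)
  have h1 : Tendsto (fun y => Real.exp (L (J y) - Real.log (J y))) atTop (𝓝 (Real.exp g)) :=
    (Real.continuous_exp.tendsto _).comp
      (tendsto_sum_primesBelow_logEulerFactor_sub_log.comp hJ)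
  have h2 : Tendsto (fun y : ℝ => Real.exp (-(Real.exp y / 2)) * y⁻¹) atTop (𝓝 0) := by
    have := (Real.tendsto_exp_neg_atTop_nhds_zero.comp
      (Real.tendsto_exp_atTop.atTop_div_const (show (0 : ℝ) < 2 by norm_num))).mul
        tendsto_inv_atTop_zero
    simpa using this
  have h3 := ((h1.mul (tendsto_floor_sub_const_div (Real.log 4))).sub h2).mul_const
    (Real.exp (-g) + ε)
  have hgt : 1 < (Real.exp g * 1 - 0) * (Real.exp (-g) + ε) := by
    have : Real.exp g * Real.exp (-g) = 1 := by rw [← Real.exp_add, add_neg_cancel, Real.exp_zero]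
    nlinarith [mul_pos (Real.exp_pos g) hε]
  have hy := (h3.eventually (lt_mem_nhds hgt)).and
    ((hJ.eventually (eventually_gt_atTop 0)).and
      ((eventually_gt_atTop (0 : ℝ)).and (eventually_ge_atTop (Real.log 4))))
  filter_upwards [(Real.tendsto_log_atTop.comp Real.tendsto_log_atTop).eventually hy,
    eventually_gt_atTop 1] with x hx hx1
  simp only [Function.comp_apply] at hx
  have hlx : 0 < Real.log x := Real.log_pos hx1
  set y := Real.log (Real.log x) with hydef
  obtain ⟨hmain, hJ0, hy0, hy4⟩ := hx
  have hey : Real.exp y = Real.log x := Real.exp_log hlx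
  have hx0 : 0 < x := by linarith
  obtain ⟨n, hn1, hn2⟩ := exists_totient_lt_and_le x hx0 (J y)
  have hJ0' : (0 : ℝ) < J y := by exact_mod_cast hJ0
  have hJle : (J y : ℝ) ≤ y - Real.log 4 := Nat.floor_le (by linarith)
  have hb : Real.exp (Real.log 4 * Real.exp (J y)) ≤ x * Real.exp (-(Real.exp y / 2)) := by
    have e1 : Real.exp (J y) ≤ Real.exp y / 4 := by
      calc Real.exp (J y) ≤ Real.exp (y - Real.log 4) := Real.exp_le_exp.2 hJle
        _ = _ := by rw [Real.exp_sub, Real.exp_log (show (0 : ℝ) < 4 by norm_num)]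
    have e2 : Real.log 4 ≤ 2 := by
      rw [show (4 : ℝ) = 2 ^ 2 by norm_num, Real.log_pow]
      push_cast
      linarith [Real.log_two_lt_d9]
    have e3 : x = Real.exp (Real.exp y) := by rw [hey, Real.exp_log hx0]
    have e4 : Real.log 4 * Real.exp (J y) ≤ 2 * (Real.exp y / 4) :=
      mul_le_mul e2 e1 (Real.exp_pos _).le (by norm_num)
    calc Real.exp (Real.log 4 * Real.exp (J y))
        ≤ Real.exp (Real.exp y + -(Real.exp y / 2)) := Real.exp_le_exp.2 (by linarith)
      _ = x * Real.exp (-(Real.exp y / 2)) := by rw [Real.exp_add, ← e3]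
  have hL : Real.exp (L (J y)) = Real.exp (L (J y) - Real.log (J y)) * J y := by
    rw [Real.exp_sub, Real.exp_log hJ0', div_mul_cancel₀ _ hJ0'.ne']
  have hpos : 0 < Real.exp (-g) + ε := by positivity
  have hkey : x * y < n * (Real.exp (-g) + ε) := by
    calc x * y = x * y * 1 := (mul_one _).symm
      _ < x * y * ((Real.exp (L (J y) - Real.log (J y)) * ((J y : ℝ) / y) -
          Real.exp (-(Real.exp y / 2)) * y⁻¹) * (Real.exp (-g) + ε)) :=
        mul_lt_mul_of_pos_left hmain (by positivity)
      _ = (x * Real.exp (L (J y)) - x * Real.exp (-(Real.exp y / 2))) * (Real.exp (-g) + ε) := by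
        rw [hL]
        field_simp
      _ ≤ n * (Real.exp (-g) + ε) := mul_le_mul_of_nonneg_right (by linarith) hpos.le
  have hn0 : n ≠ 0 := by
    rintro rfl
    rw [Nat.cast_zero, zero_mul] at hkey
    exact absurd hkey (not_lt.2 (by positivity))
  refine ⟨n, hn0, hn1, ?_⟩
  rw [div_le_div_iff₀ (by positivity) (by positivity)]
  linarith

theorem stmt_5 : ∀ ε : ℝ, 0 < ε → ∃ K : ℝ, 0 < K ∧ ∀ m k : ℕ, 2 ≤ m → m ≤ k →
    K ≤ (k : ℝ) / ((m : ℝ) - 1) →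
    delta m k ≤ ((Real.exp (-Real.eulerMascheroniConstant) + ε) /
        ((k : ℝ) / ((m : ℝ) - 1) *
          Real.log (Real.log ((k : ℝ) / ((m : ℝ) - 1))))) ^ (m - 1) := by
  intro ε hε
  obtain ⟨K, hK⟩ := eventually_atTop.1 (eventually_exists_totient_lt ε hε)
  refine ⟨max K 1, by positivity, fun m k hm _ hmk => ?_⟩
  obtain ⟨n, hn0, hn1, hn2⟩ := hK _ ((le_max_left _ _).trans hmk)
  have hm' : (0 : ℝ) < (m : ℝ) - 1 := by
    have : (2 : ℝ) ≤ m := by exact_mod_cast hm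
    linarith
  have hlt : n.totient * (m - 1) < k := by
    rw [lt_div_iff₀ hm'] at hn1
    have hcast : ((m - 1 : ℕ) : ℝ) = (m : ℝ) - 1 := by
      rw [Nat.cast_sub (by omega), Nat.cast_one]
    rw [← hcast] at hn1
    exact_mod_cast hn1
  exact (delta_le_one_div_pow hm hn0 hlt).trans (pow_le_pow_left₀ (by positivity) hn2 _)
end

section
/- Let k ≥ m ≥ 2 be integers and let q be a positive integer with (m−1)·φ(q) < k, where φ is Euler's totient function. Then the set A = {(x_1,…,x_m) ∈ ℤ^m : x_1 ≡ x_2 ≡ ⋯ ≡ x_m (mod q)} is (m,k)-plausible, and consequently δ(m,k) ≤ 1/q^{m−1}. -/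
open Filter Real

/-- Some translate of an admissible tuple consists of units modulo `q`. -/
lemma AdmissibleTuple.exists_isUnit_sub {k q : ℕ} (hq : q ≠ 0) {x : Fin k → ℤ}
    (hx : AdmissibleTuple x) : ∃ a : ℤ, ∀ i, IsUnit ((x i - a : ℤ) : ZMod q) := by
  choose r hr using fun p : q.primeFactors => hx p (Nat.prime_of_mem_primeFactors p.2)
  have hcop : Pairwise (Function.onFun Nat.Coprime fun p : q.primeFactors => (p : ℕ)) :=
    fun p p' hpp' => (Nat.coprime_primes (Nat.prime_of_mem_primeFactors p.2)
      (Nat.prime_of_mem_primeFactors p'.2)).2 (Subtype.coe_injective.ne hpp')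
  obtain ⟨y, hy⟩ := (ZMod.prodEquivPi (fun p : q.primeFactors => (p : ℕ)) hcop).surjective r
  obtain ⟨a, rfl⟩ := ZMod.intCast_surjective y
  have ha (p : q.primeFactors) : ((a : ℤ) : ZMod p) = r p := by
    rw [← hy, map_intCast, Pi.intCast_apply]
  refine ⟨a, fun i => ?_⟩
  rw [ZMod.coe_int_isUnit_iff_isCoprime, Int.isCoprime_iff_nat_coprime]
  refine Nat.Coprime.symm (Nat.coprime_of_dvd fun p hp hpx hpq => ?_)
  have hmem : p ∈ q.primeFactors := Nat.mem_primeFactors.2 ⟨hp, by simpa using hpq, hq⟩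
  refine hr ⟨p, hmem⟩ i ?_
  rw [← ha ⟨p, hmem⟩, ← sub_eq_zero, ← Int.cast_sub, ZMod.intCast_zmod_eq_zero_iff_dvd]
  exact Int.natCast_dvd.2 hpx

/-- The tuples that are constant modulo `q` form an `(m,k)`-plausible set when
`(m - 1) φ(q) < k`. -/
lemma plausible_setOf_congruent {m k q : ℕ} (hq : q ≠ 0) (hqk : (m - 1) * q.totient < k) :
    Plausible m k {h : Fin m → ℤ | ∀ i j : Fin m, (h i : ZMod q) = (h j : ZMod q)} := by
  have : NeZero q := ⟨hq⟩
  refine ⟨fun h hh t i j => ?_, fun h hh σ i j => hh _ _, fun x _ hadm => ?_⟩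
  · push_cast
    rw [hh i j]
  · obtain ⟨a, ha⟩ := hadm.exists_isUnit_sub hq
    obtain ⟨u, hu⟩ := Fintype.exists_lt_card_fiber_of_mul_lt_card (n := m - 1)
      (fun i => (ha i).unit) (by
        rw [ZMod.card_units_eq_totient, Fintype.card_fin, mul_comm]
        exact hqk)
    obtain ⟨s, hs, hcard⟩ := Finset.exists_subset_card_eq (Nat.le_of_pred_lt hu)
    refine ⟨s.orderEmbOfFin hcard, (s.orderEmbOfFin hcard).injective, fun i j => ?_⟩
    have key (i : Fin m) : (x (s.orderEmbOfFin hcard i) : ZMod q) = u + a := by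
      have h := (Finset.mem_filter.1 (hs (s.orderEmbOfFin_mem hcard i))).2
      rw [← h, IsUnit.unit_spec]
      push_cast
      ring
    simp only [Function.comp_apply, key]

lemma boxCount_setOf_congruent_le {n q : ℕ} (hq : q ≠ 0) (N : ℕ) :
    boxCount (n + 1) {h | ∀ i j, (h i : ZMod q) = (h j : ZMod q)} N ≤
      (2 * N + 1) * (2 * N / q + 1) ^ n := by
  have hq' : (0 : ℤ) < q := by omega
  have bound {z : ℤ} (hz : |z| ≤ N) : ((z + N) / q).toNat < 2 * N / q + 1 := by
    rw [abs_le] at hz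
    have h : (z + N) / q ≤ ((2 * N / q : ℕ) : ℤ) := by
      push_cast
      exact Int.ediv_le_ediv hq' (by omega)
    exact Nat.lt_succ_of_le (Int.toNat_le.2 h)
  let code : {h : Fin (n + 1) → ℤ // h ∈ {h : Fin (n + 1) → ℤ |
      ∀ i j, (h i : ZMod q) = (h j : ZMod q)} ∧ ∀ i, |h i| ≤ (N : ℤ)} →
      Fin (2 * N + 1) × (Fin n → Fin (2 * N / q + 1)) := fun h =>
    (⟨(h.1 0 + N).toNat, by have := abs_le.1 (h.2.2 0); omega⟩,
      fun i => ⟨((h.1 i.succ + N) / q).toNat, bound (h.2.2 i.succ)⟩)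
  have hcode : Function.Injective code := by
    rintro ⟨g, hg, hgN⟩ ⟨h, hh, hhN⟩ heq
    simp only [code, Prod.mk.injEq, Fin.mk.injEq, funext_iff] at heq
    obtain ⟨h0, hsucc⟩ := heq
    have hg0 := abs_le.1 (hgN 0)
    have hh0 := abs_le.1 (hhN 0)
    have e0 : g 0 = h 0 := by omega
    refine Subtype.ext (funext fun i => ?_)
    refine Fin.cases e0 (fun i => ?_) i
    have hgi := abs_le.1 (hgN i.succ)
    have hhi := abs_le.1 (hhN i.succ)
    have hdiv : (g i.succ + N) / q = (h i.succ + N) / q := by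
      have h₁ := Int.ediv_nonneg (show 0 ≤ g i.succ + N by omega) hq'.le
      have h₂ := Int.ediv_nonneg (show 0 ≤ h i.succ + N by omega) hq'.le
      have := hsucc i
      omega
    have hmod : (g i.succ + N) % q = (h i.succ + N) % q := by
      refine (ZMod.intCast_eq_intCast_iff' _ _ q).1 ?_
      push_cast
      rw [hg i.succ 0, hh i.succ 0, e0]
    have h₁ := Int.mul_ediv_add_emod (g i.succ + N) q
    have h₂ := Int.mul_ediv_add_emod (h i.succ + N) q
    rw [hdiv, hmod] at h₁
    change g i.succ = h i.succ
    linarith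
  simpa [boxCount] using Nat.card_le_card_of_injective code hcode

lemma delta_le_lowerBoxDensity {m k : ℕ} {A : Set (Fin m → ℤ)} (hA : Plausible m k A) :
    delta m k ≤ lowerBoxDensity m A :=
  csInf_le ⟨0, by rintro _ ⟨B, -, rfl⟩; exact lowerBoxDensity_nonneg m B⟩ ⟨A, hA, rfl⟩

lemma lowerBoxDensity_setOf_congruent_le {n q : ℕ} (hq : q ≠ 0) :
    lowerBoxDensity (n + 1) {h | ∀ i j, (h i : ZMod q) = (h j : ZMod q)} ≤
      1 / (q : ℝ) ^ n := by
  have hlim : Tendsto (fun N : ℕ => (1 + 1 / 2 * (1 / (N : ℝ))) *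
      (1 / (q : ℝ) + 1 / 2 * (1 / (N : ℝ))) ^ n) atTop (nhds (1 / (q : ℝ) ^ n)) := by
    have h0 := (tendsto_one_div_atTop_nhds_zero_nat (𝕜 := ℝ)).const_mul (1 / 2)
    have := (h0.const_add 1).mul ((h0.const_add (1 / (q : ℝ))).pow n)
    simpa using this
  rw [← hlim.liminf_eq]
  refine liminf_le_liminf ?_ (isBoundedUnder_of ⟨0, fun N => by positivity⟩)
    hlim.isCoboundedUnder_ge
  filter_upwards [eventually_gt_atTop 0] with N hN
  have hN' : (0 : ℝ) < N := by exact_mod_cast hN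
  have hq' : (0 : ℝ) < q := by exact_mod_cast Nat.pos_of_ne_zero hq
  have hdiv : ((2 * N / q : ℕ) : ℝ) ≤ 2 * N / q := by
    simpa using Nat.cast_div_le (α := ℝ) (m := 2 * N) (n := q)
  have hcount : (boxCount (n + 1) {h | ∀ i j, (h i : ZMod q) = (h j : ZMod q)} N : ℝ) ≤
      (2 * N + 1) * ((2 * N / q : ℕ) + 1) ^ n := by
    exact_mod_cast boxCount_setOf_congruent_le hq N
  calc _ ≤ (2 * N + 1) * (2 * N / q + 1 : ℝ) ^ n / (2 * N) ^ (n + 1) := by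
        gcongr
        exact hcount.trans (by gcongr)
    _ = (2 * N + 1) / (2 * N) * ((2 * N / q + 1) / (2 * N)) ^ n := by
        rw [pow_succ', div_pow, mul_div_mul_comm]
    _ = _ := by
        congr 2 <;> field_simp

theorem stmt_6 (m k q : ℕ) (hm : 2 ≤ m) (hmk : m ≤ k) (hq : 1 ≤ q)
    (hqk : (m - 1) * q.totient < k) :
    Plausible m k {h : Fin m → ℤ | ∀ i j : Fin m, (h i : ZMod q) = (h j : ZMod q)} ∧
      delta m k ≤ 1 / (q : ℝ) ^ (m - 1) := by
  have hq' : q ≠ 0 := by omega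
  have hA := plausible_setOf_congruent hq' hqk
  refine ⟨hA, (delta_le_lowerBoxDensity hA).trans ?_⟩
  obtain ⟨n, rfl⟩ : ∃ n, m = n + 1 := ⟨m - 1, by omega⟩
  exact lowerBoxDensity_setOf_congruent_le hq'
end
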